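/- arXiv:1909.11027 — 2 statements merged into one kernel-verified Lean document; each statement's English description precedes it below -/
import Mathlib

section
/- Let μ be a permuton such that μ([min{x_1,x_2},max{x_1,x_2}]×[min{y_1,y_2},max{y_1,y_2}]) = |x_2−x_1|·|y_2−y_1| for all pairs of points (x_1,y_1),(x_2,y_2) ∈ supp μ. Then the entire boundary of the square [0,1]² is contained in supp μ. -/
open MeasureTheory Filter

noncomputable section

/-- A permuton: a Borel probability measure on `ℝ × ℝ` (supported on `[0,1]²`)
with uniform marginals. -/
def IsPermuton (μ : Measure (ℝ × ℝ)) : Prop :=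
  IsProbabilityMeasure μ ∧
    (∀ x x' : ℝ, 0 ≤ x → x ≤ x' → x' ≤ 1 →
      μ (Set.Icc x x' ×ˢ Set.Icc (0 : ℝ) 1) = ENNReal.ofReal (x' - x)) ∧
    (∀ y y' : ℝ, 0 ≤ y → y ≤ y' → y' ≤ 1 →
      μ (Set.Icc (0 : ℝ) 1 ×ˢ Set.Icc y y') = ENNReal.ofReal (y' - y))

/-- The uniform permuton: two-dimensional Lebesgue measure on `[0,1]²`. -/
def uniformPermuton : Measure (ℝ × ℝ) :=
  volume.restrict (Set.Icc (0 : ℝ) 1 ×ˢ Set.Icc (0 : ℝ) 1)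

/-- The support of a Borel measure: all points each of whose open neighbourhoods has
positive measure. -/
def measSupport (μ : Measure (ℝ × ℝ)) : Set (ℝ × ℝ) :=
  {p | ∀ U : Set (ℝ × ℝ), IsOpen U → p ∈ U → 0 < μ U}

/-- The pattern density of a `k`-permutation `π` in a measure `μ` on `ℝ × ℝ`:
the `μ^{⊗ k}`-probability that `k` sampled points, relabelled so that their
`x`-coordinates increase, have `y`-coordinates ordered according to `π`. -/
def PermutonDensity {k : ℕ} (π : Equiv.Perm (Fin k)) (μ : Measure (ℝ × ℝ)) : ℝ :=
  ((Measure.pi fun _ : Fin k => μ)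
    {p : Fin k → ℝ × ℝ | ∃ σ : Equiv.Perm (Fin k),
      StrictMono (fun i => (p (σ i)).1) ∧
        ∀ i j : Fin k, (p (σ i)).2 < (p (σ j)).2 ↔ π i < π j}).toReal

open scoped Classical in
/-- The pattern density of a `k`-permutation `π` in an `n`-permutation `Π`:
the proportion of `k`-element subsets of `Fin n` on which `Π` induces the pattern `π`
(zero when `n < k`). -/
def PatternDensity {k n : ℕ} (π : Equiv.Perm (Fin k)) (Perm : Equiv.Perm (Fin n)) : ℝ :=
  ((Finset.univ.filter fun A : Finset (Fin n) =>
      ∃ h : A.card = k, ∀ i j : Fin k,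
        Perm ↑(A.orderIsoOfFin h i) < Perm ↑(A.orderIsoOfFin h j) ↔ π i < π j).card : ℝ) /
    (n.choose k)

/-- A sequence of permutations (of varying orders) is quasirandom if the density of every
pattern `π` converges to `1/|π|!`. -/
def Quasirandom (P : ℕ → (n : ℕ) × Equiv.Perm (Fin n)) : Prop :=
  ∀ (k : ℕ) (π : Equiv.Perm (Fin k)),
    Tendsto (fun i => PatternDensity π (P i).2) atTop (nhds (1 / (Nat.factorial k : ℝ)))

/-- A set `S` of `k`-permutations is `Σ`-forcing if a sequence of permutations is quasirandom
exactly when the sum of the densities of the patterns from `S` converges to `|S|/k!`. -/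
def SigmaForcing {k : ℕ} (S : Finset (Equiv.Perm (Fin k))) : Prop :=
  ∀ P : ℕ → (n : ℕ) × Equiv.Perm (Fin n),
    Quasirandom P ↔
      Tendsto (fun i => ∑ π ∈ S, PatternDensity π (P i).2) atTop
        (nhds ((S.card : ℝ) / (Nat.factorial k : ℝ)))

/-- The `4`-permutation written in one-line notation as `(a+1)(b+1)(c+1)(d+1)`
(inputs are 0-indexed). -/
def mk4 (a b c d : Fin 4) (h : Function.Bijective ![a, b, c, d] := by decide) :
    Equiv.Perm (Fin 4) :=
  Equiv.ofBijective _ h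

/-- A doubly stochastic matrix: non-negative entries, all row and column sums equal to one. -/
def IsDoublyStochastic {n : ℕ} (A : Matrix (Fin n) (Fin n) ℝ) : Prop :=
  (∀ i j, 0 ≤ A i j) ∧ (∀ i, ∑ j, A i j = 1) ∧ (∀ j, ∑ i, A i j = 1)

/-- The step permuton `μ[A]` associated with an `n × n` doubly stochastic matrix `A`. -/
def stepPermuton {n : ℕ} (A : Matrix (Fin n) (Fin n) ℝ) : Measure (ℝ × ℝ) :=
  ∑ i : Fin n, ∑ j : Fin n,
    ENNReal.ofReal (A i j * n) •
      volume.restrict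
        (Set.Ico ((i : ℝ) / n) (((i : ℝ) + 1) / n) ×ˢ
          Set.Ico ((j : ℝ) / n) (((j : ℝ) + 1) / n))

/-- The matrix `B^{ij}` (0-indexed: `p, q ∈ [n-1]`): `+1` at positions `(p,q)` and
`(p+1,q+1)`, `-1` at positions `(p,q+1)` and `(p+1,q)`, `0` elsewhere. -/
def Bmat (n : ℕ) (p q : Fin (n - 1)) : Matrix (Fin n) (Fin n) ℝ := fun a b =>
  (if (a : ℕ) = (p : ℕ) ∧ (b : ℕ) = (q : ℕ) then 1 else 0) +
    (if (a : ℕ) = (p : ℕ) + 1 ∧ (b : ℕ) = (q : ℕ) + 1 then 1 else 0) -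
    (if (a : ℕ) = (p : ℕ) ∧ (b : ℕ) = (q : ℕ) + 1 then 1 else 0) -
    (if (a : ℕ) = (p : ℕ) + 1 ∧ (b : ℕ) = (q : ℕ) then 1 else 0)

/-- The matrix `A + ∑_{i,j} x_{ij} B^{ij}` where `A` is the `n × n` matrix with all
entries `1/n`. -/
def pertMatrix (n : ℕ) (x : Fin (n - 1) × Fin (n - 1) → ℝ) : Matrix (Fin n) (Fin n) ℝ :=
  fun a b => 1 / n + ∑ p : Fin (n - 1) × Fin (n - 1), x p * Bmat n p.1 p.2 a b

/-- The function `h_{S,n}`: the sum over `π ∈ S` of the pattern density of `π` in the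
step permuton of the perturbed matrix. -/
def hSN (n : ℕ) (S : Finset (Equiv.Perm (Fin 4))) (x : Fin (n - 1) × Fin (n - 1) → ℝ) : ℝ :=
  ∑ π ∈ S, PermutonDensity π (stepPermuton (pertMatrix n x))

open scoped Classical in
/-- The cover matrix of a set `S` of `4`-permutations: `C i j` is the number of `π ∈ S`
with `π j = i`. -/
def coverMatrix (S : Finset (Equiv.Perm (Fin 4))) : Fin 4 → Fin 4 → ℕ := fun i j =>
  (S.filter fun π => π j = i).card

/-- The eight symmetry operations on `4`-permutations. -/
def symOps : List (Equiv.Perm (Fin 4) → Equiv.Perm (Fin 4)) :=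
  [fun σ => σ,
   fun σ => σ * Fin.revPerm,
   fun σ => Fin.revPerm * σ,
   fun σ => Fin.revPerm * σ * Fin.revPerm,
   fun σ => σ⁻¹,
   fun σ => σ⁻¹ * Fin.revPerm,
   fun σ => Fin.revPerm * σ⁻¹,
   fun σ => Fin.revPerm * σ⁻¹ * Fin.revPerm]

open scoped Classical in
/-- `T` is symmetric to `S` if one of the eight symmetry operations maps `S` onto `T`. -/
def SymmetricSets (S T : Finset (Equiv.Perm (Fin 4))) : Prop :=
  ∃ op ∈ symOps, T = S.image op

end

/-! The hypothesis says that `μ` agrees with Lebesgue measure `λ` on every rectangle spanned by two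
points of the support, and `μ ≤ λ` on these rectangles already forces `μ ≤ λ`:

* Five such rectangles, spanned by the leftmost, rightmost, lowest and highest support points in a
  given rectangle `R`, cover the part of the support in `R`. Hence `μ R ≤ 5 * λ R`, so `μ ≪ λ`.
* Around a density point of the support, a small square is nearly filled by a rectangle spanned by
  two support points, so `μ ≤ (1 + ε) * λ` on small squares, and density points are `μ`-conull by
  the absolute continuity.

Since `μ` gives the unit square its full Lebesgue measure, the support misses only a `λ`-null part
of the square. As the support is closed, it misses nothing: it contains the whole square. -/

open Set Metric Topology
open scoped ENNReal NNReal Pointwise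

section General

variable {X : Type*} [MeasurableSpace X]

lemma le_of_ae_frequently_closedBall_le [MetricSpace X] [SecondCountableTopology X] [BorelSpace X]
    [HasBesicovitchCovering X] {μ ν : Measure X} [SFinite μ] [IsLocallyFiniteMeasure ν]
    (h : ∀ᵐ x ∂μ, ∃ᶠ r in 𝓝[>] (0 : ℝ), μ (closedBall x r) ≤ ν (closedBall x r)) : μ ≤ ν := by
  refine Measure.le_iff'.2 fun s ↦ ?_
  set good := {x | ∃ᶠ r in 𝓝[>] (0 : ℝ), μ (closedBall x r) ≤ ν (closedBall x r)}
  calc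
    μ s = μ (s ∩ good) := (measure_inter_conull h).symm
    _ ≤ ν (s ∩ good) :=
      (Besicovitch.vitaliFamily μ).measure_le_of_frequently_le ν .rfl _ fun x hx ↦
        (Besicovitch.tendsto_filterAt μ x).frequently hx.2
    _ ≤ ν s := measure_mono inter_subset_left

lemma subset_support_of_le_of_measure_le [TopologicalSpace X] [OpensMeasurableSpace X]
    [HereditarilyLindelofSpace X] {μ ν : Measure X} [ν.IsOpenPosMeasure] (hμν : μ ≤ ν) {s : Set X}
    (hs : s ⊆ closure (interior s)) (hfin : ν s ≠ ∞) (hle : ν s ≤ μ s) : s ⊆ μ.support := by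
  have hnull : ν (s \ μ.support) = 0 := by
    have hinter : ν s ≤ ν (s ∩ μ.support) := calc
      ν s ≤ μ s := hle
      _ = μ (s ∩ μ.support) := (measure_inter_conull Measure.measure_compl_support).symm
      _ ≤ ν (s ∩ μ.support) := hμν _
    have hfin' : ν (s ∩ μ.support) ≠ ∞ := measure_ne_top_of_subset inter_subset_left hfin
    have hsplit : ν (s ∩ μ.support) + ν (s \ μ.support) = ν s :=
      measure_inter_add_sdiff s Measure.isClosed_support.measurableSet
    exact nonpos_iff_eq_zero.1 <|
      (ENNReal.add_le_add_iff_left hfin').1 (hsplit.le.trans (by rwa [add_zero]))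
  have hopen : IsOpen (interior s \ μ.support) := isOpen_interior.sdiff Measure.isClosed_support
  have hempty : interior s \ μ.support = ∅ :=
    hopen.eq_empty_of_measure_zero <|
      measure_mono_null (sdiff_subset_sdiff_left interior_subset) hnull
  exact hs.trans (closure_minimal (sdiff_eq_empty.1 hempty) Measure.isClosed_support)

end General

section Plane

lemma measSupport_eq_support (μ : Measure (ℝ × ℝ)) : measSupport μ = μ.support := by
  rw [Measure.support_eq_forall_isOpen]
  ext p
  exact forall_congr' fun U ↦ forall_comm

lemma volume_uIcc_prod (p q : ℝ × ℝ) :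
    volume (uIcc p q) = ENNReal.ofReal (|q.1 - p.1| * |q.2 - p.2|) := by
  rw [uIcc_prod_eq, Measure.volume_eq_prod, Measure.prod_prod, Real.volume_interval,
    Real.volume_interval, ENNReal.ofReal_mul (abs_nonneg _)]

lemma closedBall_prod_eq_Icc (p : ℝ × ℝ) (r : ℝ) :
    closedBall p r = Icc (p - r • 1) (p + r • 1) := by
  rw [← closedBall_prod_same, Real.closedBall_eq_Icc, Real.closedBall_eq_Icc, Icc_prod_eq]
  simp

lemma volume_closedBall_mul_prod (p : ℝ × ℝ) {t : ℝ≥0} (ht : 0 < t) (r : ℝ) :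
    volume (closedBall p (t * r)) = t ^ 2 * volume (closedBall p r) := by
  rw [Measure.addHaar_closedBall_mul_of_pos _ _ (NNReal.coe_pos.2 ht),
    Measure.addHaar_closedBall_center _ p, Module.finrank_prod, Module.finrank_self,
    ENNReal.ofReal_pow t.coe_nonneg, ENNReal.ofReal_coe_nnreal]

lemma exists_finset_subset_iUnion_uIcc {K : Set (ℝ × ℝ)} (hK : IsCompact K) :
    ∃ F : Finset ((ℝ × ℝ) × ℝ × ℝ), F.card ≤ 5 ∧ (∀ e ∈ F, e.1 ∈ K ∧ e.2 ∈ K) ∧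
      K ⊆ ⋃ e ∈ F, uIcc e.1 e.2 := by
  classical
  rcases K.eq_empty_or_nonempty with rfl | hne
  · exact ⟨∅, by simp⟩
  obtain ⟨l, hlK, hl⟩ := hK.exists_isMinOn hne continuous_fst.continuousOn
  obtain ⟨r, hrK, hr⟩ := hK.exists_isMaxOn hne continuous_fst.continuousOn
  obtain ⟨b, hbK, hb⟩ := hK.exists_isMinOn hne continuous_snd.continuousOn
  obtain ⟨t, htK, ht⟩ := hK.exists_isMaxOn hne continuous_snd.continuousOn
  refine ⟨{(l, t), (t, r), (r, b), (b, l), (l, r)}, Finset.card_le_five, by simp [*], fun z hz ↦ ?_⟩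
  have hlz : l.1 ≤ z.1 := hl hz
  have hzr : z.1 ≤ r.1 := hr hz
  have hbz : b.2 ≤ z.2 := hb hz
  have hzt : z.2 ≤ t.2 := ht hz
  simp only [Finset.mem_insert, Finset.mem_singleton, iUnion_iUnion_eq_or_left,
    iUnion_iUnion_eq_left, uIcc_prod_eq, mem_union, mem_prod, mem_uIcc]
  grind

variable {μ : Measure (ℝ × ℝ)}

lemma measure_Icc_le_five_mul_volume
    (h : ∀ p ∈ μ.support, ∀ q ∈ μ.support, μ (uIcc p q) ≤ volume (uIcc p q))
    (a b : ℝ × ℝ) : μ (Icc a b) ≤ 5 * volume (Icc a b) := by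
  have hK : IsCompact (Icc a b ∩ μ.support) := isCompact_Icc.inter_right Measure.isClosed_support
  obtain ⟨F, hcard, hF, hcover⟩ := exists_finset_subset_iUnion_uIcc hK
  calc
    μ (Icc a b) = μ (Icc a b ∩ μ.support) :=
      (measure_inter_conull Measure.measure_compl_support).symm
    _ ≤ μ (⋃ e ∈ F, uIcc e.1 e.2) := measure_mono hcover
    _ ≤ ∑ e ∈ F, μ (uIcc e.1 e.2) := measure_biUnion_finset_le F _
    _ ≤ ∑ _e ∈ F, volume (Icc a b) := Finset.sum_le_sum fun e he ↦
      (h _ (hF e he).1.2 _ (hF e he).2.2).trans <|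
        measure_mono (uIcc_subset_Icc (hF e he).1.1 (hF e he).2.1)
    _ = F.card * volume (Icc a b) := by rw [Finset.sum_const, nsmul_eq_mul]
    _ ≤ 5 * volume (Icc a b) := by gcongr; exact_mod_cast hcard

lemma le_five_smul_volume
    (h : ∀ p ∈ μ.support, ∀ q ∈ μ.support, μ (uIcc p q) ≤ volume (uIcc p q)) :
    μ ≤ (5 : ℝ≥0) • volume := by
  have hIcc := measure_Icc_le_five_mul_volume h
  have : IsLocallyFiniteMeasure μ := by
    refine ⟨fun p ↦ ⟨closedBall p 1, closedBall_mem_nhds p one_pos, ?_⟩⟩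
    rw [closedBall_prod_eq_Icc]
    exact (hIcc _ _).trans_lt <|
      ENNReal.mul_lt_top ENNReal.ofNat_lt_top isCompact_Icc.measure_lt_top
  refine le_of_ae_frequently_closedBall_le (.of_forall fun p ↦ .of_forall fun r ↦ ?_)
  rw [closedBall_prod_eq_Icc]
  exact hIcc _ _

lemma eventually_measure_closedBall_le_of_density_one
    (h : ∀ p ∈ μ.support, ∀ q ∈ μ.support, μ (uIcc p q) ≤ volume (uIcc p q))
    {p : ℝ × ℝ}
    (hp : Tendsto (fun r ↦ volume (μ.support ∩ closedBall p r) / volume (closedBall p r))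
      (𝓝[>] 0) (𝓝 1)) {t : ℝ} (ht : 1 < t) :
    ∀ᶠ r in 𝓝[>] (0 : ℝ), μ (closedBall p r) ≤ volume (closedBall p (t * r)) := by
  have hpos (a b : ℝ) (hab : a < b) : volume (Icc (a • 1 : ℝ × ℝ) (b • 1)) ≠ 0 := by
    rw [Icc_prod_eq, Measure.volume_eq_prod, Measure.prod_prod]
    simp [hab]
  have hlow := Measure.eventually_nonempty_inter_smul_of_density_one volume _ p hp
    (Icc (-(t • 1)) (-1)) measurableSet_Icc (by simpa using hpos (-t) (-1) (neg_lt_neg ht))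
  have hhigh := Measure.eventually_nonempty_inter_smul_of_density_one volume _ p hp
    (Icc 1 (t • 1)) measurableSet_Icc (by simpa using hpos 1 t ht)
  filter_upwards [hlow, hhigh, self_mem_nhdsWithin] with r hlow hhigh (hr : 0 < r)
  rw [singleton_add] at hlow hhigh
  obtain ⟨_, hq₁, _, ⟨v, ⟨hv, hv'⟩, rfl⟩, rfl⟩ := hlow
  obtain ⟨_, hq₂, _, ⟨w, ⟨hw, hw'⟩, rfl⟩, rfl⟩ := hhigh
  have hmono {a b : ℝ × ℝ} (hab : a ≤ b) : p + r • a ≤ p + r • b := by gcongr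
  have hball (s : ℝ) : closedBall p (s * r) = Icc (p + r • -(s • 1)) (p + r • (s • 1)) := by
    rw [closedBall_prod_eq_Icc]
    congr 1 <;> module
  have hinner : closedBall p r ⊆ uIcc (p + r • v) (p + r • w) := by
    have hball_one := hball 1
    rw [one_mul, one_smul] at hball_one
    rw [hball_one]
    exact (Icc_subset_Icc (hmono hv') (hmono hw)).trans Icc_subset_uIcc
  have houter : uIcc (p + r • v) (p + r • w) ⊆ closedBall p (t * r) := by
    have hneg : (-1 : ℝ × ℝ) ≤ 1 := neg_le_self zero_le_one
    rw [hball]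
    exact uIcc_subset_Icc ⟨hmono hv, hmono (hv'.trans (hneg.trans (hw.trans hw')))⟩
      ⟨hmono (hv.trans (hv'.trans (hneg.trans hw))), hmono hw'⟩
  exact (measure_mono hinner).trans ((h _ hq₁ _ hq₂).trans (measure_mono houter))

lemma le_sq_smul_volume
    (h : ∀ p ∈ μ.support, ∀ q ∈ μ.support, μ (uIcc p q) ≤ volume (uIcc p q))
    {t : ℝ≥0} (ht : 1 < t) : μ ≤ t ^ 2 • volume := by
  have hle := le_five_smul_volume h
  have : IsLocallyFiniteMeasure μ := Measure.isLocallyFiniteMeasure_of_le hle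
  have hac : μ ≪ volume :=
    (Measure.absolutelyContinuous_of_le hle).trans Measure.smul_absolutelyContinuous
  have hdensity := hac.ae_le <|
    ae_imp_of_ae_restrict (Besicovitch.ae_tendsto_measure_inter_div volume μ.support)
  have hsupp : ∀ᵐ p ∂μ, p ∈ μ.support := Measure.support_mem_ae
  refine le_of_ae_frequently_closedBall_le ?_
  filter_upwards [hdensity, hsupp] with p hp hps
  have hball := eventually_measure_closedBall_le_of_density_one h (hp hps) (NNReal.one_lt_coe.2 ht)
  exact hball.frequently.mono fun r hr ↦
    hr.trans_eq (volume_closedBall_mul_prod p (zero_lt_one.trans ht) r)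

lemma le_volume_of_measure_uIcc_le
    (h : ∀ p ∈ μ.support, ∀ q ∈ μ.support, μ (uIcc p q) ≤ volume (uIcc p q)) :
    μ ≤ volume := by
  refine Measure.le_iff'.2 fun s ↦ ?_
  have hlim : Tendsto (fun t : ℝ≥0 ↦ (t : ℝ≥0∞) ^ 2 * volume s) (𝓝[>] 1) (𝓝 (volume s)) := by
    have hsq : Tendsto (fun t : ℝ≥0 ↦ (t : ℝ≥0∞) ^ 2) (𝓝[>] 1) (𝓝 1) :=
      (((ENNReal.continuous_pow 2).comp ENNReal.continuous_coe).tendsto' 1 1 (by simp)).mono_left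
        nhdsWithin_le_nhds
    simpa using ENNReal.Tendsto.mul_const hsq (Or.inl one_ne_zero)
  refine ge_of_tendsto hlim ?_
  filter_upwards [self_mem_nhdsWithin] with t ht
  exact le_sq_smul_volume h ht s

end Plane

theorem statement_3_general (μ : Measure (ℝ × ℝ))
    (hμ : 1 ≤ μ (Set.Icc (0 : ℝ) 1 ×ˢ Set.Icc (0 : ℝ) 1))
    (h : ∀ p ∈ measSupport μ, ∀ q ∈ measSupport μ,
      μ (Set.Icc (min p.1 q.1) (max p.1 q.1) ×ˢ Set.Icc (min p.2 q.2) (max p.2 q.2)) ≤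
        ENNReal.ofReal (|q.1 - p.1| * |q.2 - p.2|)) :
    Set.Icc (0 : ℝ) 1 ×ˢ Set.Icc (0 : ℝ) 1 ⊆ measSupport μ := by
  have hvol : volume (Set.Icc (0 : ℝ) 1 ×ˢ Set.Icc (0 : ℝ) 1) = 1 := by
    simp [Measure.volume_eq_prod, -Icc_prod_Icc]
  rw [measSupport_eq_support] at h ⊢
  have hle : μ ≤ volume := le_volume_of_measure_uIcc_le fun p hp q hq ↦ by
    rw [volume_uIcc_prod, uIcc_prod_eq]
    exact h p hp q hq
  refine subset_support_of_le_of_measure_le hle ?_ ?_ ?_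
  · rw [interior_prod_eq, closure_prod_eq, closure_interior_Icc zero_ne_one]
  · exact hvol ▸ ENNReal.one_ne_top
  · rwa [hvol]

theorem statement_3 (μ : Measure (ℝ × ℝ)) (hμ : IsPermuton μ)
    (h : ∀ p ∈ measSupport μ, ∀ q ∈ measSupport μ,
      μ (Set.Icc (min p.1 q.1) (max p.1 q.1) ×ˢ Set.Icc (min p.2 q.2) (max p.2 q.2)) =
        ENNReal.ofReal (|q.1 - p.1| * |q.2 - p.2|)) :
    frontier (Set.Icc (0 : ℝ) 1 ×ˢ Set.Icc (0 : ℝ) 1) ⊆ measSupport μ :=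
  (isClosed_Icc.prod isClosed_Icc).frontier_subset.trans <| statement_3_general μ
    (by rw [hμ.2.1 0 1 le_rfl zero_le_one le_rfl]; simp) fun p hp q hq ↦ (h p hp q hq).le
end

section
/- Let μ be a permuton and let (x_1,y_1),(x_2,y_2) ∈ [0,1]² with x_1 ≤ x_2 and y_1 ≤ y_2. Set x_0 = y_0 = 0 and x_3 = y_3 = 1, and for i,j ∈ {1,2,3} let a_{ij} = μ([x_{i−1},x_i]×[y_{j−1},y_j]). If a_{22}a_{33} − a_{23}a_{32} + a_{22}a_{11} − a_{12}a_{21} + a_{22}a_{31} − a_{21}a_{32} + a_{22}a_{13} − a_{12}a_{23} = 0, then a_{22} = (x_2−x_1)(y_2−y_1). -/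
open MeasureTheory Filter

/-! Summing the minors `a p q * a i j - a p j * a i q` of a matrix of cell masses over all `i, j`
gives `a p q` times the total mass, minus the product of the masses of row `p` and column `q`. For
a permuton these are `1` and the side lengths of the cell, so the sum is `a p q` minus the area of
the cell. The terms with `i = p` or `j = q` vanish; on a `3 × 3` grid with `p, q` in the middle, the
other four are the minors of the hypothesis. Closed cells overlap only in segments parallel to the
axes, which are null because the marginals have no atoms. -/

theorem sum_minors_eq {m n R : Type*} [Fintype m] [Fintype n] [NonUnitalNonAssocRing R]
    (A : Matrix m n R) (p : m) (q : n) :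
    ∑ i, ∑ j, (A p q * A i j - A p j * A i q) =
      A p q * ∑ i, ∑ j, A i j - (∑ j, A p j) * ∑ i, A i q := by
  rw [Finset.sum_mul_sum, Finset.sum_comm (f := fun j i => A p j * A i q)]
  simp only [Finset.sum_sub_distrib, Finset.mul_sum]

theorem sum_succ_sub_castSucc {G : Type*} [AddCommGroup G] {n : ℕ} (f : Fin (n + 1) → G) :
    ∑ i : Fin n, (f i.succ - f i.castSucc) = f (Fin.last n) - f 0 := by
  rw [Finset.sum_sub_distrib, sub_eq_sub_iff_add_eq_add, add_comm, ← Fin.sum_univ_succ,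
    Fin.sum_univ_castSucc, add_comm]

section AtomlessOnLine

variable {α : Type*} [LinearOrder α] [TopologicalSpace α] [OrderClosedTopology α]
  [MeasurableSpace α] [OpensMeasurableSpace α] (ν : Measure α) [NullSingletonClass ν]

theorem measure_Icc_add_measure_Icc {a b c : α} (hab : a ≤ b) (hbc : b ≤ c) :
    ν (Set.Icc a b) + ν (Set.Icc b c) = ν (Set.Icc a c) := by
  rw [← Set.Icc_union_Icc_eq_Icc hab hbc]
  refine (measure_union₀ measurableSet_Icc.nullMeasurableSet ?_).symm
  rw [AEDisjoint, Set.Icc_inter_Icc_eq_singleton hab hbc, measure_singleton]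

theorem sum_measure_Icc_castSucc_succ {n : ℕ} {t : Fin (n + 1) → α} (ht : Monotone t) :
    ∑ i : Fin n, ν (Set.Icc (t i.castSucc) (t i.succ)) = ν (Set.Icc (t 0) (t (Fin.last n))) := by
  induction n with
  | zero => simp
  | succ n ih =>
    rw [Fin.sum_univ_castSucc]
    simp only [← Fin.castSucc_succ]
    rw [ih (t := fun i => t i.castSucc) (ht.comp Fin.strictMono_castSucc.monotone)]
    exact measure_Icc_add_measure_Icc ν (ht (Fin.zero_le _)) (ht (Fin.castSucc_le_succ _))

end AtomlessOnLine

/-- Division points of `[0,1]`, in weakly increasing order and including both endpoints; points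
may coincide, so that the closed intervals between consecutive points may be degenerate. -/
structure IsUnitPartition {n : ℕ} (t : Fin (n + 1) → ℝ) : Prop where
  monotone : Monotone t
  zero : t 0 = 0
  last : t (Fin.last n) = 1

namespace IsUnitPartition

variable {n : ℕ} {t : Fin (n + 1) → ℝ}

theorem nonneg (ht : IsUnitPartition t) (i : Fin (n + 1)) : 0 ≤ t i :=
  ht.zero.ge.trans (ht.monotone (Fin.zero_le i))

theorem le_one (ht : IsUnitPartition t) (i : Fin (n + 1)) : t i ≤ 1 :=
  (ht.monotone (Fin.le_last i)).trans ht.last.le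

theorem castSucc_le_succ (ht : IsUnitPartition t) (i : Fin n) : t i.castSucc ≤ t i.succ :=
  ht.monotone (Fin.castSucc_le_succ i)

theorem sum_length (ht : IsUnitPartition t) : ∑ i : Fin n, (t i.succ - t i.castSucc) = 1 := by
  rw [sum_succ_sub_castSucc, ht.zero, ht.last, sub_zero]

theorem of_two_points {a b : ℝ} (ha : 0 ≤ a) (hab : a ≤ b) (hb : b ≤ 1) :
    IsUnitPartition ![0, a, b, 1] where
  monotone := Fin.monotone_iff_le_succ.2 (by simp [Fin.forall_fin_succ, ha, hab, hb])
  zero := rfl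
  last := rfl

end IsUnitPartition

/-- The masses that a measure on the plane gives to the closed cells of a grid, as a matrix whose
rows are indexed by the intervals on the first axis. -/
def gridMass {m n : ℕ} (μ : Measure (ℝ × ℝ)) (x : Fin (m + 1) → ℝ) (y : Fin (n + 1) → ℝ) :
    Matrix (Fin m) (Fin n) ℝ := fun i j =>
  μ.real (Set.Icc (x i.castSucc) (x i.succ) ×ˢ Set.Icc (y j.castSucc) (y j.succ))

theorem gridMass_map_swap {m n : ℕ} (μ : Measure (ℝ × ℝ)) (x : Fin (m + 1) → ℝ)
    (y : Fin (n + 1) → ℝ) (i : Fin m) (j : Fin n) :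
    gridMass (μ.map Prod.swap) y x j i = gridMass μ x y i j := by
  rw [gridMass, map_measureReal_apply measurable_swap (measurableSet_Icc.prod measurableSet_Icc),
    Set.preimage_swap_prod, gridMass]

namespace IsPermuton

variable {μ : Measure (ℝ × ℝ)}

theorem map_swap (hμ : IsPermuton μ) : IsPermuton (μ.map Prod.swap) := by
  obtain ⟨hprob, hfst, hsnd⟩ := hμ
  refine ⟨Measure.isProbabilityMeasure_map measurable_swap.aemeasurable, ?_, ?_⟩ <;>
    intro u v hu huv hv <;>
    rw [Measure.map_apply measurable_swap (measurableSet_Icc.prod measurableSet_Icc),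
      Set.preimage_swap_prod]
  exacts [hsnd u v hu huv hv, hfst u v hu huv hv]

theorem ae_mem_unitSquare (hμ : IsPermuton μ) :
    ∀ᵐ z ∂μ, z ∈ Set.Icc (0 : ℝ) 1 ×ˢ Set.Icc (0 : ℝ) 1 := by
  have := hμ.1
  refine (mem_ae_iff_prob_eq_one (measurableSet_Icc.prod measurableSet_Icc)).2 ?_
  simpa using hμ.2.1 0 1 le_rfl zero_le_one le_rfl

theorem nullSingletonClass_snd (hμ : IsPermuton μ) : NullSingletonClass μ.snd where
  measure_singleton y := by
    rw [Measure.snd_apply (measurableSet_singleton y),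
      ← Measure.measure_inter_eq_of_ae hμ.ae_mem_unitSquare,
      ← Set.univ_prod, Set.prod_inter_prod, Set.inter_univ]
    by_cases hy : y ∈ Set.Icc (0 : ℝ) 1
    · rw [Set.inter_singleton_of_mem hy, ← Set.Icc_self, hμ.2.2 y y hy.1 le_rfl hy.2, sub_self,
        ENNReal.ofReal_zero]
    · rw [Set.inter_singleton_eq_empty.2 hy, Set.prod_empty, measure_empty]

theorem sum_measure_prod_Icc (hμ : IsPermuton μ) {n : ℕ} {t : Fin (n + 1) → ℝ} (ht : Monotone t)
    (s : Set ℝ) :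
    ∑ j : Fin n, μ (s ×ˢ Set.Icc (t j.castSucc) (t j.succ)) =
      μ (s ×ˢ Set.Icc (t 0) (t (Fin.last n))) := by
  let ν : Measure ℝ := (μ.restrict (Prod.fst ⁻¹' s)).snd
  have hν (u v : ℝ) : ν (Set.Icc u v) = μ (s ×ˢ Set.Icc u v) := by
    rw [Measure.snd_apply measurableSet_Icc,
      Measure.restrict_apply (measurable_snd measurableSet_Icc), Set.inter_comm, ← Set.prod_eq]
  have hνμ : ν ≤ μ.snd := Measure.map_mono Measure.restrict_le_self measurable_snd
  have := hμ.nullSingletonClass_snd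
  have : NullSingletonClass ν :=
    ⟨fun y => le_antisymm ((hνμ {y}).trans (measure_singleton y).le) zero_le⟩
  simpa only [hν] using sum_measure_Icc_castSucc_succ ν ht

variable {m n : ℕ} {x : Fin (m + 1) → ℝ} {y : Fin (n + 1) → ℝ}

theorem sum_gridMass_row (hμ : IsPermuton μ) (hx : IsUnitPartition x) (hy : IsUnitPartition y)
    (i : Fin m) : ∑ j, gridMass μ x y i j = x i.succ - x i.castSucc := by
  have := hμ.1
  simp only [gridMass, Measure.real]
  rw [← ENNReal.toReal_sum fun _ _ => measure_ne_top μ _,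
    hμ.sum_measure_prod_Icc hy.monotone, hy.zero, hy.last,
    hμ.2.1 _ _ (hx.nonneg _) (hx.castSucc_le_succ i) (hx.le_one _),
    ENNReal.toReal_ofReal (sub_nonneg.2 (hx.castSucc_le_succ i))]

theorem sum_gridMass_col (hμ : IsPermuton μ) (hx : IsUnitPartition x) (hy : IsUnitPartition y)
    (j : Fin n) : ∑ i, gridMass μ x y i j = y j.succ - y j.castSucc := by
  simpa only [gridMass_map_swap] using hμ.map_swap.sum_gridMass_row hy hx j

theorem sum_gridMass (hμ : IsPermuton μ) (hx : IsUnitPartition x) (hy : IsUnitPartition y) :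
    ∑ i, ∑ j, gridMass μ x y i j = 1 := by
  simp only [hμ.sum_gridMass_row hx hy, hx.sum_length]

theorem sum_minors_gridMass (hμ : IsPermuton μ) (hx : IsUnitPartition x) (hy : IsUnitPartition y)
    (p : Fin m) (q : Fin n) :
    ∑ i, ∑ j, (gridMass μ x y p q * gridMass μ x y i j -
        gridMass μ x y p j * gridMass μ x y i q) =
      gridMass μ x y p q - (x p.succ - x p.castSucc) * (y q.succ - y q.castSucc) := by
  rw [sum_minors_eq, hμ.sum_gridMass hx hy, hμ.sum_gridMass_row hx hy,
    hμ.sum_gridMass_col hx hy, mul_one]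

end IsPermuton

theorem statement_4 (μ : Measure (ℝ × ℝ)) (hμ : IsPermuton μ)
    (x₁ y₁ x₂ y₂ : ℝ)
    (h₁ : (x₁, y₁) ∈ Set.Icc (0 : ℝ) 1 ×ˢ Set.Icc (0 : ℝ) 1)
    (h₂ : (x₂, y₂) ∈ Set.Icc (0 : ℝ) 1 ×ˢ Set.Icc (0 : ℝ) 1)
    (hx : x₁ ≤ x₂) (hy : y₁ ≤ y₂)
    (a : Fin 3 → Fin 3 → ℝ)
    (ha : ∀ i j : Fin 3, a i j =
      (μ (Set.Icc (![0, x₁, x₂, 1] i.castSucc) (![0, x₁, x₂, 1] i.succ) ×ˢ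
          Set.Icc (![0, y₁, y₂, 1] j.castSucc) (![0, y₁, y₂, 1] j.succ))).toReal)
    (heq : a 1 1 * a 2 2 - a 1 2 * a 2 1 + a 1 1 * a 0 0 - a 0 1 * a 1 0 +
      a 1 1 * a 2 0 - a 1 0 * a 2 1 + a 1 1 * a 0 2 - a 0 1 * a 1 2 = 0) :
    a 1 1 = (x₂ - x₁) * (y₂ - y₁) := by
  have hx_part : IsUnitPartition ![0, x₁, x₂, 1] := .of_two_points h₁.1.1 hx h₂.1.2
  have hy_part : IsUnitPartition ![0, y₁, y₂, 1] := .of_two_points h₁.2.1 hy h₂.2.2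
  obtain rfl : a = gridMass μ ![0, x₁, x₂, 1] ![0, y₁, y₂, 1] := funext₂ ha
  have hminors := hμ.sum_minors_gridMass hx_part hy_part 1 1
  refine sub_eq_zero.1 (hminors.symm.trans ?_)
  simp only [Fin.sum_univ_three]
  linear_combination heq
end
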